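/- Let G be a finite simple graph on vertex set V = {v_1,…,v_n} with a fixed orientation of its edges and graph polynomial F_G, and let τ ∈ ℤ_{≥0}^n satisfy [x^τ]F_G ≠ 0. Define A_1 = {i : 2τ_i ≤ deg_G(v_i) − 2} and B_1 = {i : 2τ_i ≥ deg_G(v_i) + 2}. Choose any A_3 ⊆ A_1 with |A_3| = max(0, |A_1| − |B_1|) and any B_3 ⊆ B_1 with |B_3| = max(0, |B_1| − |A_1|). Define f : V → ℤ by f(v_i) = max(τ_i, deg_G(v_i) − τ_i) + 1 if i ∈ (A_1 ∪ B_1) \ (A_3 ∪ B_3), and f(v_i) = max(τ_i, deg_G(v_i) − τ_i) + 2 otherwise. Then for every integer k ≥ 2 the graph G □ C_{2k} is f-choosable in the following sense: for every assignment of lists A_{(v,u)} ⊆ ℝ with |A_{(v,u)}| ≥ f(v) for each vertex (v,u) of G □ C_{2k}, there exists a proper coloring of G □ C_{2k} choosing each vertex's color from its list. -/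

import Mathlib

/-!
By the Combinatorial Nullstellensatz, a monomial `x^t` with nonzero coefficient in a homogeneous
polynomial that vanishes on improper colorings gives a proper coloring as soon as every list at `w`
has more than `t w` colors. Since `C_{2k}` is bipartite, negating the colors on odd layers replaces
each factor `x_{(v, u)} - x_{(v, u - 1)}` of the graph polynomial of `G □ C_{2k}` by
`x_{(v, u)} + x_{(v, u - 1)}`, which removes all signs coming from the cycle edges.

Choosing an endpoint of each cycle edge gives a state `s_u ⊆ V` for the edges between the layers
`u - 1` and `u`. For a fixed choice the coefficient factors over the layers, so summing over all
choices gives the trace of a product of `2k` transfer matrices. We take the same exponents `t` on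
all even layers and `deg + 2 - t` on all odd layers. Swapping the chosen endpoint of every edge
shows that the two transfer matrices are `T` and `± Tᵀ`, so the coefficient is
`± tr ((T Tᵀ)^k)`, the trace of a power of a positive semidefinite matrix. It is nonzero because
`[x^τ] F_G` is an entry of `T` whenever `τ ≤ t ≤ τ + 2`.
-/

open MvPolynomial Finset

/-- An orientation of a simple graph: a finite set of ordered pairs containing,
for each edge `{u, v}` of `G`, exactly one of `(u, v)` and `(v, u)`. -/
structure GraphOrientation {V : Type*} (G : SimpleGraph V) where
  edges : Finset (V × V)
  adj_of_mem : ∀ e ∈ edges, G.Adj e.1 e.2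
  mem_iff_not_swap_mem : ∀ u v : V, G.Adj u v → ((u, v) ∈ edges ↔ (v, u) ∉ edges)

/-- The graph polynomial `∏_{(i,j) ∈ E} (x_j - x_i)` associated to an orientation. -/
noncomputable def graphPoly {V : Type*} {G : SimpleGraph V} (D : GraphOrientation G) :
    MvPolynomial V ℝ :=
  ∏ e ∈ D.edges, (X e.2 - X e.1)

/-- The outdegree of a vertex in an orientation. -/
def GraphOrientation.outDeg {V : Type*} [DecidableEq V] {G : SimpleGraph V}
    (D : GraphOrientation G) (v : V) : ℕ :=
  (D.edges.filter fun e => e.1 = v).card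

/-- `G` is `f`-choosable: any assignment of lists of real colors with `|A_v| ≥ f v`
admits a proper coloring from the lists. -/
def Choosable {V : Type*} (G : SimpleGraph V) (f : V → ℕ) : Prop :=
  ∀ A : V → Finset ℝ, (∀ v, f v ≤ (A v).card) →
    ∃ c : V → ℝ, (∀ v, c v ∈ A v) ∧ ∀ u v : V, G.Adj u v → c u ≠ c v

/-- The list chromatic number. -/
noncomputable def chNumber {V : Type*} (G : SimpleGraph V) : ℕ :=
  sInf {m | Choosable G fun _ => m}

/-- The Alon–Tarsi number: the least `k` such that the graph polynomial has a
monomial `x^d` with nonzero coefficient and `max_v d_v = k - 1`. -/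
noncomputable def ATNumber {V : Type*} (G : SimpleGraph V) : ℕ :=
  sInf {k | ∃ (D : GraphOrientation G) (d : V →₀ ℕ),
    MvPolynomial.coeff d (graphPoly D) ≠ 0 ∧ d.support.sup d + 1 = k}

instance {α β : Type*} {G : SimpleGraph α} {H : SimpleGraph β}
    [DecidableEq α] [DecidableEq β] [DecidableRel G.Adj] [DecidableRel H.Adj] :
    DecidableRel (G.boxProd H).Adj :=
  fun _ _ => decidable_of_iff _ SimpleGraph.boxProd_adj.symm

/-! ### Coefficients -/

section Coefficients

variable {R U V : Type*}

theorem sum_mapDomain_mk_apply [Fintype U] (d : U → V →₀ ℕ) (v : V) (u : U) :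
    (∑ u, (d u).mapDomain fun v => (v, u)) (v, u) = d u v := by
  classical
  rw [Finsupp.finsetSum_apply, Finset.sum_eq_single_of_mem u (mem_univ u)]
  · exact Finsupp.mapDomain_apply (Prod.mk_left_injective u) _ _
  · intro u' _ hne
    refine Finsupp.mapDomain_of_notMem_range _ _ ?_
    rintro ⟨w, hw⟩
    exact hne (Prod.mk.inj hw).2

theorem sum_mapDomain_mk_eq_iff [Fintype U] {t : V × U →₀ ℕ} {d : U → V →₀ ℕ}
    (ht : ∀ v u, t (v, u) = d u v) (d' : U → V →₀ ℕ) :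
    ∑ u, (d' u).mapDomain (fun v => (v, u)) = t ↔ d' = d := by
  simp only [Finsupp.ext_iff, Prod.forall, sum_mapDomain_mk_apply, ht, funext_iff]
  exact forall_comm

theorem coeff_prod_rename_mk [CommSemiring R] [Fintype U] (p : U → MvPolynomial V R)
    {t : V × U →₀ ℕ} {d : U → V →₀ ℕ} (ht : ∀ v u, t (v, u) = d u v) :
    coeff t (∏ u, rename (fun v => (v, u)) (p u)) = ∏ u, coeff (d u) (p u) := by
  classical
  have rename_eq_sum (u : U) : rename (fun v => (v, u)) (p u) = ∑ m ∈ (p u).support,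
      monomial (m.mapDomain fun v => (v, u)) (coeff m (p u)) := by
    conv_lhs => rw [(p u).as_sum]
    simp only [map_sum, rename_monomial]
  simp_rw [rename_eq_sum, prod_univ_sum, coeff_sum, ← monomial_sum_prod, coeff_monomial,
    sum_mapDomain_mk_eq_iff ht, sum_ite_eq', Fintype.mem_piFinset, mem_support_iff]
  split_ifs with hd
  · rfl
  · push Not at hd
    obtain ⟨u, hu⟩ := hd
    exact (prod_eq_zero (mem_univ u) hu).symm

theorem exists_eval_ne_zero_of_isHomogeneous [Finite V] [CommRing R] [IsDomain R]
    {p : MvPolynomial V R} {N : ℕ} (hp : p.IsHomogeneous N) {t : V →₀ ℕ} (ht : coeff t p ≠ 0)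
    (A : V → Finset R) (hA : ∀ v, t v < #(A v)) :
    ∃ c : V → R, (∀ v, c v ∈ A v) ∧ eval c p ≠ 0 := by
  refine combinatorial_nullstellensatz_exists_eval_nonzero p t ht ?_ A hA
  rw [hp.totalDegree (ne_zero_iff.2 ⟨t, ht⟩)]
  exact not_imp_comm.1 (fun h => hp.coeff_eq_zero (Ne.symm h)) ht

end Coefficients

/-! ### Traces -/

section Traces

variable {R S : Type*} [Fintype S] [DecidableEq S]

theorem prod_ofFn_apply [CommSemiring R] {n : ℕ} (A : Fin (n + 1) → Matrix S S R) (a b : S) :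
    (List.ofFn A).prod a b = ∑ s : Fin n → S, ∏ u,
      A u ((Fin.cons a s : Fin (n + 1) → S) u) ((Fin.snoc s b : Fin (n + 1) → S) u) := by
  induction n generalizing a with
  | zero => simp [Fin.snoc]
  | succ n ih =>
    rw [List.ofFn_succ, List.prod_cons, Matrix.mul_apply,
      ← (Fin.consEquiv fun _ : Fin (n + 1) => S).sum_comp, Fintype.sum_prod_type]
    refine Fintype.sum_congr _ _ fun c => ?_
    rw [ih, mul_sum]
    refine Fintype.sum_congr _ _ fun s => ?_
    have snoc_cons : (Fin.snoc (Fin.cons c s : Fin (n + 1) → S) b : Fin (n + 2) → S) =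
        Fin.cons c (Fin.snoc s b) := (Fin.cons_snoc_eq_snoc_cons c s b).symm
    change _ = ∏ u, A u ((Fin.cons a (Fin.cons c s : Fin (n + 1) → S) : Fin (n + 2) → S) u)
      ((Fin.snoc (Fin.cons c s : Fin (n + 1) → S) b : Fin (n + 2) → S) u)
    simp_rw [snoc_cons, Fin.prod_univ_succ (n := n + 1), Fin.cons_zero, Fin.cons_succ]

theorem trace_prod_ofFn [CommSemiring R] {n : ℕ} [NeZero n] (A : Fin n → Matrix S S R) :
    (List.ofFn A).prod.trace = ∑ s : Fin n → S, ∏ u, A u (s u) (s (u + 1)) := by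
  obtain ⟨n, rfl⟩ := Nat.exists_eq_succ_of_ne_zero (NeZero.ne n)
  rw [← (Fin.consEquiv fun _ : Fin (n + 1) => S).sum_comp, Fintype.sum_prod_type, Matrix.trace]
  refine Fintype.sum_congr _ _ fun a => ?_
  rw [Matrix.diag_apply, prod_ofFn_apply]
  refine Fintype.sum_congr _ _ fun s => Fintype.prod_congr _ _ fun u => ?_
  induction u using Fin.lastCases <;> simp [Fin.consEquiv_apply]

theorem prod_ofFn_alternating {M : Type*} [Monoid M] (a b : M) (k : ℕ) :
    (List.ofFn fun u : Fin (2 * k) => if Even u.val then a else b).prod = (a * b) ^ k := by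
  simp [List.ofFn_mul', List.prod_flatten]

theorem pow_ne_zero_of_isHermitian [Ring R] [PartialOrder R] [StarRing R] [StarOrderedRing R]
    [NoZeroDivisors R] {A : Matrix S S R} (hA : A.IsHermitian) (hne : A ≠ 0) (n : ℕ) :
    A ^ n ≠ 0 := by
  have pow_two_pow_ne_zero (j : ℕ) : A ^ 2 ^ j ≠ 0 := by
    induction j with
    | zero => simpa using hne
    | succ j ih =>
      have hpow := Matrix.self_mul_conjTranspose_eq_zero (A := A ^ 2 ^ j)
      rw [(hA.pow _).eq] at hpow
      rwa [pow_succ, pow_mul, pow_two, Ne, hpow]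
  exact fun h => pow_two_pow_ne_zero n (pow_eq_zero_of_le Nat.lt_two_pow_self.le h)

open scoped ComplexOrder in
theorem trace_mul_conjTranspose_pow_ne_zero [RCLike R] {T : Matrix S S R} (hT : T ≠ 0) (k : ℕ) :
    ((T * T.conjTranspose) ^ k).trace ≠ 0 := by
  have hpos := Matrix.posSemidef_self_mul_conjTranspose T
  rw [Ne, (hpos.pow k).trace_eq_zero_iff]
  exact pow_ne_zero_of_isHermitian hpos.isHermitian
    (Matrix.self_mul_conjTranspose_eq_zero.not.2 hT) k

end Traces

/-! ### Reflecting the graph polynomial -/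

section Reflection

variable {R V : Type*}

/-- The vector of total degrees (indegree plus outdegree) of a digraph with arc set `E`. -/
noncomputable def arcDegree (E : Finset (V × V)) : V →₀ ℕ :=
  ∑ e ∈ E, (Finsupp.single e.1 1 + Finsupp.single e.2 1)

theorem arcDegree_edges_apply [Fintype V] {G : SimpleGraph V} [DecidableRel G.Adj]
    (D : GraphOrientation G) (v : V) : arcDegree D.edges v = G.degree v := by
  classical
  have adj_of_mem (u w : V) : (u, w) ∈ D.edges → G.Adj u w := D.adj_of_mem (u, w)
  have card_out : #{e ∈ D.edges | e.1 = v} = #{w ∈ G.neighborFinset v | (v, w) ∈ D.edges} := by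
    refine card_bij' (fun e _ => e.2) (fun w _ => (v, w)) ?_ ?_ ?_ ?_ <;>
      grind [SimpleGraph.mem_neighborFinset]
  have card_in : #{e ∈ D.edges | e.2 = v} = #{w ∈ G.neighborFinset v | (v, w) ∉ D.edges} := by
    refine card_bij' (fun e _ => e.1) (fun w _ => (w, v)) ?_ ?_ ?_ ?_ <;>
      grind [SimpleGraph.mem_neighborFinset, D.mem_iff_not_swap_mem, G.adj_comm]
  rw [← G.card_neighborFinset_eq_degree, ← card_filter_add_card_filter_not
    (s := G.neighborFinset v) fun w => (v, w) ∈ D.edges, ← card_out, ← card_in]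
  simp [arcDegree, Finsupp.single_apply, sum_add_distrib]

/-- The exponent of the monomial of `arcPoly R E` obtained by choosing the tail of each arc in `T`
and the head of all other arcs. -/
noncomputable def choiceExponent [DecidableEq V] (E T : Finset (V × V)) : V →₀ ℕ :=
  ∑ e ∈ E \ T, Finsupp.single e.2 1 + ∑ e ∈ T, Finsupp.single e.1 1

theorem choiceExponent_add_choiceExponent_sdiff [DecidableEq V] {E T : Finset (V × V)}
    (hT : T ⊆ E) : choiceExponent E T + choiceExponent E (E \ T) = arcDegree E := by
  rw [arcDegree, sum_add_distrib, ← sum_sdiff hT (f := fun e => Finsupp.single e.1 1),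
    ← sum_sdiff hT (f := fun e => Finsupp.single e.2 1), choiceExponent, choiceExponent,
    Finset.sdiff_sdiff_eq_self hT]
  abel

variable [CommRing R]

variable (R) in
/-- The graph polynomial of a digraph with arc set `E`, over an arbitrary coefficient ring. For the
arcs of a `GraphOrientation` it is definitionally `graphPoly`. -/
noncomputable def arcPoly (E : Finset (V × V)) : MvPolynomial V R :=
  ∏ e ∈ E, (X e.2 - X e.1)

theorem arcPoly_eq_sum [DecidableEq V] (E : Finset (V × V)) :
    arcPoly R E = ∑ T ∈ E.powerset, monomial (choiceExponent E T) ((-1) ^ #T) := by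
  rw [arcPoly, prod_sub]
  refine sum_congr rfl fun T _ => ?_
  rw [← mul_one ((-1 : R) ^ #T), ← C_mul_monomial, choiceExponent, ← one_mul (1 : R),
    ← monomial_mul, monomial_sum_one, monomial_sum_one, mul_assoc]
  simp [X]

theorem isHomogeneous_arcPoly (E : Finset (V × V)) : (arcPoly R E).IsHomogeneous #E := by
  simpa [arcPoly] using IsHomogeneous.prod E _ (fun _ => 1) fun e _ =>
    (isHomogeneous_X R e.2).sub (isHomogeneous_X R e.1)

theorem le_arcDegree_of_coeff_ne_zero {E : Finset (V × V)} {d : V →₀ ℕ}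
    (hd : coeff d (arcPoly R E) ≠ 0) : d ≤ arcDegree E := by
  classical
  rw [arcPoly_eq_sum, coeff_sum] at hd
  obtain ⟨T, hT, hne⟩ := exists_ne_zero_of_sum_ne_zero hd
  rw [coeff_monomial, ite_ne_right_iff] at hne
  rw [← hne.1, ← choiceExponent_add_choiceExponent_sdiff (mem_powerset.1 hT)]
  exact le_self_add

theorem coeff_arcPoly_reflect {E : Finset (V × V)} {d d' : V →₀ ℕ} (h : d + d' = arcDegree E) :
    coeff d (arcPoly R E) = (-1) ^ #E * coeff d' (arcPoly R E) := by
  classical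
  simp_rw [arcPoly_eq_sum, coeff_sum, coeff_monomial, mul_sum]
  refine sum_nbij' (E \ ·) (E \ ·) (by simp) (by simp) (by simp) (by simp) fun T hT => ?_
  rw [mem_powerset] at hT
  have hsum := (choiceExponent_add_choiceExponent_sdiff hT).trans h.symm
  have hiff : choiceExponent E T = d ↔ choiceExponent E (E \ T) = d' :=
    ⟨fun hd => add_left_cancel (hd ▸ hsum), fun hd => add_right_cancel (hd ▸ hsum)⟩
  have hsign : (-1 : R) ^ #T = (-1) ^ #E * (-1) ^ #(E \ T) := by
    rw [← card_sdiff_add_card_eq_card hT, pow_add, mul_right_comm, ← mul_pow]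
    simp
  simp only [hiff, hsign, mul_ite, mul_zero]

theorem le_of_coeff_arcPoly_mul_monomial_ne_zero {E : Finset (V × V)} {d d' m m' : V →₀ ℕ}
    (h : d + d' = arcDegree E + (m + m')) (hd : coeff d (arcPoly R E * monomial m 1) ≠ 0) :
    m' ≤ d' := by
  rw [coeff_mul_monomial', mul_one, ite_ne_right_iff] at hd
  intro v
  have hmd := hd.1 v
  have hle := le_arcDegree_of_coeff_ne_zero hd.2 v
  have hv := DFunLike.congr_fun h v
  simp only [Finsupp.add_apply, Finsupp.tsub_apply] at hle hv
  omega

theorem coeff_arcPoly_mul_monomial_reflect {E : Finset (V × V)} {d d' m m' : V →₀ ℕ}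
    (h : d + d' = arcDegree E + (m + m')) :
    coeff d (arcPoly R E * monomial m 1) =
      (-1) ^ #E * coeff d' (arcPoly R E * monomial m' 1) := by
  have h' : d' + d = arcDegree E + (m' + m) := by rw [add_comm, h, add_comm m]
  by_cases hm : m ≤ d
  · by_cases hm' : m' ≤ d'
    · obtain ⟨a, rfl⟩ := exists_add_of_le hm
      obtain ⟨a', rfl⟩ := exists_add_of_le hm'
      have ha : a + a' = arcDegree E := by
        rw [add_add_add_comm, add_comm] at h
        exact add_right_cancel h
      simp only [add_comm m, add_comm m', coeff_mul_monomial, mul_one, coeff_arcPoly_reflect ha]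
    · rw [not_imp_comm.1 (le_of_coeff_arcPoly_mul_monomial_ne_zero (R := R) h) hm',
        coeff_mul_monomial', if_neg hm', mul_zero]
  · rw [not_imp_comm.1 (le_of_coeff_arcPoly_mul_monomial_ne_zero (R := R) h') hm, mul_zero,
      coeff_mul_monomial', if_neg hm]

end Reflection

/-! ### Transfer matrices -/

section Transfer

variable {R V : Type*} [Fintype V]

section SignedBoxPoly

variable [CommSemiring R]

/-- The graph polynomial of `G □ C_n`, for `F` the graph polynomial of `G`, with the sign of the
second variable of each cycle edge reversed. For `n = 2` each cycle edge occurs twice. -/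
noncomputable def signedBoxPoly (F : MvPolynomial V R) (n : ℕ) [NeZero n] :
    MvPolynomial (V × Fin n) R :=
  (∏ u, rename (fun v => (v, u)) F) * ∏ u, ∏ v, (X (v, u) + X (v, u - 1))

theorem isHomogeneous_signedBoxPoly {F : MvPolynomial V R} {N : ℕ} (hF : F.IsHomogeneous N)
    (n : ℕ) [NeZero n] : (signedBoxPoly F n).IsHomogeneous (n * N + n * Fintype.card V) := by
  have hlayers : (∏ u : Fin n, rename (fun v => (v, u)) F).IsHomogeneous (n * N) := by
    simpa using IsHomogeneous.prod (univ : Finset (Fin n)) _ (fun _ => N) fun u _ =>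
      hF.rename_isHomogeneous (f := fun v => (v, u))
  have hcycle (u : Fin n) : (∏ v : V, (X (v, u) + X (v, u - 1)) :
      MvPolynomial (V × Fin n) R).IsHomogeneous (Fintype.card V) := by
    simpa using IsHomogeneous.prod (univ : Finset V) _ (fun _ => 1) fun v _ =>
      (isHomogeneous_X R (v, u)).add (isHomogeneous_X R (v, u - 1))
  refine hlayers.mul ?_
  simpa using IsHomogeneous.prod (univ : Finset (Fin n)) _ (fun _ => Fintype.card V)
    fun u _ => hcycle u

theorem eval_signedBoxPoly_ne_zero_iff [NoZeroDivisors R] [Nontrivial R] {F : MvPolynomial V R}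
    {n : ℕ} [NeZero n] {c : V × Fin n → R} :
    eval c (signedBoxPoly F n) ≠ 0 ↔
      (∀ u, eval (fun v => c (v, u)) F ≠ 0) ∧ ∀ u v, c (v, u) + c (v, u - 1) ≠ 0 := by
  simp [signedBoxPoly, prod_ne_zero_iff, eval_rename, Function.comp_def]

end SignedBoxPoly

variable [DecidableEq V]

/-- The exponent contributed to a layer of `G □ C_n` by the cycle edges. A state is a set of
vertices of `G`: those at which the chosen endpoint of the cycle edge is the later one. The edges
entering the layer are in state `s` and those leaving it in state `s'`. -/
noncomputable def layerExponent (s s' : Finset V) : V →₀ ℕ :=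
  ∑ v ∈ s, Finsupp.single v 1 + ∑ v ∈ s'ᶜ, Finsupp.single v 1

theorem layerExponent_apply (s s' : Finset V) (v : V) :
    layerExponent s s' v = (if v ∈ s then 1 else 0) + if v ∈ s' then 0 else 1 := by
  simp [layerExponent, Finsupp.single_apply, ite_not]

theorem layerExponent_add_swap_apply (s s' : Finset V) (v : V) :
    (layerExponent s s' + layerExponent s' s) v = 2 := by
  rw [Finsupp.add_apply, layerExponent_apply, layerExponent_apply]
  split_ifs <;> rfl

variable [CommSemiring R]

theorem rename_monomial_layerExponent {U : Type*} (s s' : Finset V) (u : U) :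
    rename (fun v => (v, u)) (monomial (layerExponent s s') (1 : R)) =
      (∏ v ∈ s, X (v, u)) * ∏ v ∈ s'ᶜ, X (v, u) := by
  rw [layerExponent, ← one_mul (1 : R), ← monomial_mul, monomial_sum_one, monomial_sum_one]
  simp [map_prod, X, rename_monomial]

variable (R V) in
theorem prod_X_add_X_eq_sum (n : ℕ) [NeZero n] :
    (∏ u, ∏ v, (X (v, u) + X (v, u - 1)) : MvPolynomial (V × Fin n) R) =
      ∑ s : Fin n → Finset V, ∏ u,
        rename (fun v => (v, u)) (monomial (layerExponent (s u) (s (u + 1))) 1) := by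
  simp_rw [Fintype.prod_add, prod_univ_sum, Fintype.piFinset_univ, rename_monomial_layerExponent,
    prod_mul_distrib]
  refine Fintype.sum_congr _ _ fun s => congr_arg _ ?_
  simpa using (Equiv.prod_comp (Equiv.addRight (1 : Fin n))
    fun u => ∏ v ∈ (s u)ᶜ, (X (v, u - 1) : MvPolynomial (V × Fin n) R)).symm

/-- The transfer matrix of a layer with polynomial `F`: its entries are the coefficients of `x^d`
when the cycle edges entering and leaving the layer are in prescribed states. -/
noncomputable def transferMatrix (F : MvPolynomial V R) (d : V →₀ ℕ) :
    Matrix (Finset V) (Finset V) R :=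
  Matrix.of fun s s' => coeff d (F * monomial (layerExponent s s') 1)

theorem coeff_signedBoxPoly (F : MvPolynomial V R) {n : ℕ} [NeZero n] {t : V × Fin n →₀ ℕ}
    {d : Fin n → V →₀ ℕ} (ht : ∀ v u, t (v, u) = d u v) :
    coeff t (signedBoxPoly F n) = (List.ofFn fun u => transferMatrix F (d u)).prod.trace := by
  simp_rw [signedBoxPoly, prod_X_add_X_eq_sum, mul_sum, coeff_sum, ← prod_mul_distrib, ← map_mul,
    coeff_prod_rename_mk _ ht, trace_prod_ofFn, transferMatrix, Matrix.of_apply]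

theorem transferMatrix_ne_zero {F : MvPolynomial V R} {τ t : V →₀ ℕ} (hτ : coeff τ F ≠ 0)
    (ht : ∀ v, τ v ≤ t v ∧ t v ≤ τ v + 2) : transferMatrix F t ≠ 0 := by
  set s : Finset V := {v | t v = τ v + 2}
  set s' : Finset V := {v | t v = τ v}
  have ht_eq : t = τ + layerExponent s s' := by
    ext v
    have := ht v
    simp only [Finsupp.add_apply, layerExponent_apply, s, s', mem_filter_univ]
    split_ifs <;> omega
  have hentry : transferMatrix F t s s' = coeff τ F := by
    rw [transferMatrix, Matrix.of_apply]
    nth_rw 1 [ht_eq]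
    rw [coeff_mul_monomial, mul_one]
  intro h0
  rw [h0, Matrix.zero_apply] at hentry
  exact hτ hentry.symm

end Transfer

section ArcTransfer

variable {V : Type*} [Fintype V] {E : Finset (V × V)} {d d' : V →₀ ℕ}

theorem transferMatrix_arcPoly_reflect {R : Type*} [CommRing R] [DecidableEq V]
    (h : ∀ v, d v + d' v = arcDegree E v + 2) :
    transferMatrix (arcPoly R E) d' =
      (-1 : R) ^ #E • (transferMatrix (arcPoly R E) d).transpose := by
  ext s' s
  refine coeff_arcPoly_mul_monomial_reflect (Finsupp.ext fun v => ?_)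
  rw [Finsupp.add_apply, add_comm, h, Finsupp.add_apply, layerExponent_add_swap_apply]

theorem coeff_signedBoxPoly_arcPoly_ne_zero {τ : V →₀ ℕ} (hτ : coeff τ (arcPoly ℝ E) ≠ 0)
    (hd : ∀ v, τ v ≤ d v ∧ d v ≤ τ v + 2) (h : ∀ v, d v + d' v = arcDegree E v + 2)
    {k : ℕ} [NeZero (2 * k)] {t : V × Fin (2 * k) →₀ ℕ}
    (ht : ∀ v u, t (v, u) = if Even u.val then d v else d' v) :
    coeff t (signedBoxPoly (arcPoly ℝ E) (2 * k)) ≠ 0 := by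
  classical
  set T := transferMatrix (arcPoly ℝ E) d with hT
  have hcoeff : coeff t (signedBoxPoly (arcPoly ℝ E) (2 * k)) =
      ((-1 : ℝ) ^ #E) ^ k * ((T * T.conjTranspose) ^ k).trace := by
    rw [coeff_signedBoxPoly (d := fun u => if Even u.val then d else d') _ fun v u => by
      rw [ht]; split_ifs <;> rfl]
    simp_rw [apply_ite (transferMatrix (arcPoly ℝ E)), prod_ofFn_alternating,
      transferMatrix_arcPoly_reflect h, ← hT, Matrix.conjTranspose_eq_transpose_of_trivial,
      Matrix.mul_smul, smul_pow, Matrix.trace_smul, smul_eq_mul]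
  rw [hcoeff]
  exact mul_ne_zero (by simp) (trace_mul_conjTranspose_pow_ne_zero (transferMatrix_ne_zero hτ hd) k)

end ArcTransfer

/-! ### List colorings -/

section Choosable

variable {V : Type*} {G : SimpleGraph V}

theorem Choosable.mono {f g : V → ℕ} (hfg : f ≤ g) (hf : Choosable G f) : Choosable G g :=
  fun A hA => hf A fun v => (hfg v).trans (hA v)

theorem ne_of_eval_graphPoly_ne_zero {D : GraphOrientation G} {c : V → ℝ}
    (hc : eval c (graphPoly D) ≠ 0) {u v : V} (h : G.Adj u v) : c u ≠ c v := by
  have hedge : ∀ e ∈ D.edges, c e.2 - c e.1 ≠ 0 := by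
    simpa [graphPoly, map_prod, prod_ne_zero_iff] using hc
  by_cases huv : (u, v) ∈ D.edges
  · exact (sub_ne_zero.1 (hedge _ huv)).symm
  · exact sub_ne_zero.1 (hedge _ ((D.mem_iff_not_swap_mem v u h.symm).2 huv))

theorem eq_add_one_or_eq_add_one_of_cycleGraph_adj {n : ℕ} [NeZero n] {u v : Fin n}
    (h : (SimpleGraph.cycleGraph n).Adj u v) : v = u + 1 ∨ u = v + 1 := by
  obtain ⟨n, rfl⟩ := Nat.exists_eq_succ_of_ne_zero (NeZero.ne n)
  cases n with
  | zero => exact absurd (Subsingleton.elim u v) h.ne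
  | succ n =>
    rw [SimpleGraph.cycleGraph_adj, sub_eq_iff_eq_add', sub_eq_iff_eq_add'] at h
    simpa only [or_comm, add_comm] using h

theorem neg_one_pow_val_add_one {M : Type*} [Monoid M] [HasDistribNeg M] {n : ℕ} [NeZero n]
    (hn : Even n) (u : Fin n) : (-1 : M) ^ (u + 1).val = -(-1) ^ u.val := by
  obtain ⟨n, rfl⟩ := Nat.exists_eq_succ_of_ne_zero (NeZero.ne n)
  rw [Nat.succ_eq_add_one, Nat.even_add_one, Nat.not_even_iff_odd] at hn
  rw [Fin.val_add_one]
  split_ifs with hu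
  · simp [hu, hn.neg_one_pow]
  · rw [pow_succ, mul_neg_one]

theorem choosable_boxProd_cycleGraph_of_coeff_ne_zero [Fintype V] (D : GraphOrientation G) {n : ℕ}
    [NeZero n] (hn : Even n) {t : V × Fin n →₀ ℕ}
    (ht : coeff t (signedBoxPoly (graphPoly D) n) ≠ 0) :
    Choosable (G.boxProd (SimpleGraph.cycleGraph n)) fun w => t w + 1 := by
  intro A hA
  let ε (u : Fin n) : ℝ := (-1) ^ u.val
  have hε (u : Fin n) : ε u * ε u = 1 := by rw [← mul_pow]; simp
  obtain ⟨c, hcA, hc⟩ := exists_eval_ne_zero_of_isHomogeneous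
    (isHomogeneous_signedBoxPoly (isHomogeneous_arcPoly D.edges) n) ht
    (fun w => (A w).image (ε w.2 * ·)) fun w => by
      rw [card_image_of_injective _ (mul_right_injective₀ (left_ne_zero_of_mul_eq_one (hε w.2)))]
      exact hA w
  obtain ⟨hlayers, hcycles⟩ := eval_signedBoxPoly_ne_zero_iff.1 hc
  have hmem (w : V × Fin n) : ε w.2 * c w ∈ A w := by
    obtain ⟨x, hx, hxw⟩ := mem_image.1 (hcA w)
    rwa [← hxw, ← mul_assoc, hε, one_mul]
  refine ⟨fun w => ε w.2 * c w, hmem, ?_⟩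
  have hsucc (u : Fin n) (v : V) : ε u * c (v, u) ≠ ε (u + 1) * c (v, u + 1) := by
    have hsum := hcycles (u + 1) v
    rw [add_sub_cancel_right] at hsum
    have hεu := left_ne_zero_of_mul_eq_one (hε u)
    rw [show ε (u + 1) = -ε u from neg_one_pow_val_add_one hn u, neg_mul, ← mul_neg,
      Ne, mul_right_inj' hεu, ← add_eq_zero_iff_eq_neg, add_comm]
    exact hsum
  rintro ⟨v, u⟩ ⟨v', u'⟩ hadj
  obtain ⟨hG, rfl : u = u'⟩ | ⟨hC, rfl : v = v'⟩ := SimpleGraph.boxProd_adj.1 hadj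
  · exact fun h => ne_of_eval_graphPoly_ne_zero (hlayers u) hG
      (mul_left_cancel₀ (left_ne_zero_of_mul_eq_one (hε u)) h)
  · obtain rfl | rfl : u' = u + 1 ∨ u = u' + 1 := eq_add_one_or_eq_add_one_of_cycleGraph_adj hC
    · exact hsucc u v
    · exact (hsucc u' v).symm

theorem choosable_boxProd_cycleGraph [Fintype V] [DecidableRel G.Adj] (D : GraphOrientation G)
    {τ : V →₀ ℕ} (hτ : coeff τ (graphPoly D) ≠ 0) {t : V → ℕ}
    (ht : ∀ v, τ v ≤ t v ∧ t v ≤ τ v + 2) (k : ℕ) :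
    Choosable (G.boxProd (SimpleGraph.cycleGraph (2 * k)))
      fun w => (if Even w.2.val then t w.1 else G.degree w.1 + 2 - t w.1) + 1 := by
  obtain rfl | hk := eq_or_ne k 0
  · exact fun _ _ => ⟨fun _ => 0, fun w => w.2.elim0, fun w => w.2.elim0⟩
  have : NeZero (2 * k) := ⟨mul_ne_zero two_ne_zero hk⟩
  have hsum (v : V) : t v + (G.degree v + 2 - t v) = arcDegree D.edges v + 2 := by
    have hdeg := le_arcDegree_of_coeff_ne_zero hτ v
    rw [arcDegree_edges_apply] at hdeg ⊢
    have := ht v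
    omega
  exact choosable_boxProd_cycleGraph_of_coeff_ne_zero D (even_two_mul k)
    (t := Finsupp.equivFunOnFinite.symm fun w => if Even w.2.val then t w.1 else
      G.degree w.1 + 2 - t w.1)
    (coeff_signedBoxPoly_arcPoly_ne_zero (d := Finsupp.equivFunOnFinite.symm t)
      (d' := Finsupp.equivFunOnFinite.symm fun v => G.degree v + 2 - t v) hτ ht hsum
      fun _ _ => rfl)

theorem stmt12_general [Fintype V] [DecidableRel G.Adj] (D : GraphOrientation G) {τ : V →₀ ℕ}
    (hτ : coeff τ (graphPoly D) ≠ 0) (k : ℕ) :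
    Choosable (G.boxProd (SimpleGraph.cycleGraph (2 * k))) fun w =>
      max (τ w.1) (G.degree w.1 - τ w.1) +
        if 2 * τ w.1 + 2 ≤ G.degree w.1 ∨ G.degree w.1 + 2 ≤ 2 * τ w.1 then 1 else 2 := by
  let t (v : V) : ℕ :=
    if 2 * τ v + 2 ≤ G.degree v then τ v + 2 else if G.degree v + 2 ≤ 2 * τ v then τ v else τ v + 1
  have ht (v : V) : τ v ≤ t v ∧ t v ≤ τ v + 2 := by
    simp only [t]
    split_ifs <;> omega
  refine (choosable_boxProd_cycleGraph D hτ ht k).mono fun w => ?_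
  simp only [t]
  split_ifs <;> omega

end Choosable

/-- Let `τ` be an exponent vector with `[x^τ] F_G ≠ 0`, let
`A₁ = {i : 2τᵢ ≤ deg(vᵢ) - 2}`, `B₁ = {i : 2τᵢ ≥ deg(vᵢ) + 2}`, and choose
`A₃ ⊆ A₁`, `B₃ ⊆ B₁` with `|A₃| = max(0, |A₁| - |B₁|)`, `|B₃| = max(0, |B₁| - |A₁|)`.
With `f(vᵢ) = max(τᵢ, deg(vᵢ) - τᵢ) + 1` for `i ∈ (A₁ ∪ B₁) \ (A₃ ∪ B₃)` and
`f(vᵢ) = max(τᵢ, deg(vᵢ) - τᵢ) + 2` otherwise, the graph `G □ C_{2k}` is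
`f`-choosable (lists of size `f(v)` at every vertex `(v, u)`). -/
theorem stmt12 (n : ℕ) (G : SimpleGraph (Fin n)) [DecidableRel G.Adj]
    (D : GraphOrientation G) (τ : Fin n → ℕ)
    (hne : MvPolynomial.coeff (Finsupp.equivFunOnFinite.symm τ) (graphPoly D) ≠ 0)
    (A1 B1 A3 B3 : Finset (Fin n))
    (hA1 : A1 = Finset.univ.filter fun i => 2 * τ i + 2 ≤ G.degree i)
    (hB1 : B1 = Finset.univ.filter fun i => G.degree i + 2 ≤ 2 * τ i)
    (hA3 : A3 ⊆ A1) (hA3card : A3.card = A1.card - B1.card)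
    (hB3 : B3 ⊆ B1) (hB3card : B3.card = B1.card - A1.card)
    (k : ℕ) (hk : 2 ≤ k) :
    Choosable (G.boxProd (SimpleGraph.cycleGraph (2 * k)))
      (fun w => max (τ w.1) (G.degree w.1 - τ w.1) +
        if w.1 ∈ (A1 ∪ B1) \ (A3 ∪ B3) then 1 else 2) := by
  refine (stmt12_general D hne k).mono fun w => ?_
  simp only [hA1, hB1, mem_sdiff, mem_union, mem_filter_univ,
    Finsupp.equivFunOnFinite_symm_apply_apply]
  split_ifs <;> omega
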